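/- Fix p ∈ ℕ, t_p > t₀ and θ_p > 0, and suppose that [f(t,x)]_{n_p} ≤ A_p(t)[x]_{n_p} + B_p for all t ∈ [0,t₀] and x ∈ 𝒮, and [f(t,x)]_{n_p} ≤ C_p([x]_{n_p} + 1) for all t ∈ [t₀,t_p] and x ∈ 𝒮, where A_p ∈ L¹(0,t₀) is nonnegative and B_p, C_p ≥ 0. Let M_p = G_p‖A_p‖_{L¹} + C_p/θ_p, K_p = G_p t₀ B_p + C_p(t_p − t₀), and suppose M_p < 1. Then for every ρ_p ≥ (1 − M_p)^{-1}K_p, the set Ω_p = {x ∈ C(J,𝒮) : ℛ_p(x) ≤ ρ_p} satisfies T(Ω_p) ⊆ Ω_p, where ℛ_p(x) = max{𝒫_p(x), 𝒬_p(x)}, 𝒫_p(x) = max_{0≤t≤t₀} [x(t)]_{n_p}, 𝒬_p(x) = max_{t₀≤t≤t_p} e^{−θ_p(t−t₀)}[x(t)]_{n_p}, and G_p = [(𝕀 − ⟨α,𝕀⟩)^{-1}]_{n_p}·[‖α‖_*]_{n_p} + 1. -/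

import Mathlib

open Set MeasureTheory

noncomputable section

/-- Projection of `ℝ` onto the half line `J = [0, ∞)`. -/
def pj (s : ℝ) : Set.Ici (0:ℝ) := ⟨max 0 s, le_max_left 0 s⟩

/-- The seminorm `[x]ₙ = max_{1 ≤ i ≤ n} |xᵢ|` on `𝒮 = ℝ^ℕ` (components indexed from `0` to `n-1`). -/
def semS (n : ℕ) (x : ℕ → ℝ) : ℝ := ⨆ i : Fin n, |x (i : ℕ)|

/-- Restriction of the `n`-th component of `x ∈ C(J, 𝒮)` to `[0, t₀]`, as an element of `C([0,t₀], ℝ)`. -/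
def restr (t₀ : ℝ) (x : C(Set.Ici (0:ℝ), ℕ → ℝ)) (n : ℕ) : C(Set.Icc (0:ℝ) t₀, ℝ) :=
  ⟨fun s => x ⟨s.1, s.2.1⟩ n,
    ((continuous_apply n).comp x.continuous).comp
      (continuous_inclusion Set.Icc_subset_Ici_self)⟩

/-- `IsT t₀ f α T` says that `T` is the operator
`T(v)(t) = (𝕀 − ⟨α,𝕀⟩)⁻¹ · ⟨α, (∫₀^· f(s,v(s)) ds)|_{[0,t₀]}⟩ + ∫₀^t f(s,v(s)) ds`,
written componentwise; `P` is the restriction of the primitive `∫₀^· f_n(s,v(s)) ds` to `[0,t₀]`. -/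
def IsT (t₀ : ℝ) (f : ℕ → ℝ → (ℕ → ℝ) → ℝ)
    (α : ℕ → C(Set.Icc (0:ℝ) t₀, ℝ) →L[ℝ] ℝ)
    (T : C(Set.Ici (0:ℝ), ℕ → ℝ) → C(Set.Ici (0:ℝ), ℕ → ℝ)) : Prop :=
  ∀ v : C(Set.Ici (0:ℝ), ℕ → ℝ), ∀ n : ℕ,
    ∃ P : C(Set.Icc (0:ℝ) t₀, ℝ),
      (∀ s : Set.Icc (0:ℝ) t₀, P s = ∫ u in (0:ℝ)..(s : ℝ), f n u (v (pj u))) ∧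
      ∀ t : Set.Ici (0:ℝ),
        T v t n = (1 - α n 1)⁻¹ * α n P + ∫ s in (0:ℝ)..(t : ℝ), f n s (v (pj s))

/-- `𝒫ₙ(x) = max_{0 ≤ t ≤ t₀} [x(t)]ₙ`. -/
def Psem (t₀ : ℝ) (n : ℕ) (x : C(Set.Ici (0:ℝ), ℕ → ℝ)) : ℝ :=
  ⨆ t : Set.Icc (0:ℝ) t₀, semS n (x ⟨t.1, t.2.1⟩)

/-- `𝒬ₙ(x) = max_{t₀ ≤ t ≤ t_p} e^{-θ(t-t₀)} [x(t)]ₙ`. -/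
def Qsem (t₀ tp θ : ℝ) (ht₀ : 0 ≤ t₀) (n : ℕ) (x : C(Set.Ici (0:ℝ), ℕ → ℝ)) : ℝ :=
  ⨆ t : Set.Icc t₀ tp, Real.exp (-θ * (t.1 - t₀)) * semS n (x ⟨t.1, le_trans ht₀ t.2.1⟩)

/-- `Gₙ = [(𝕀 − ⟨α,𝕀⟩)⁻¹]ₙ · [‖α‖_*]ₙ + 1`. -/
def Gconst (t₀ : ℝ) (α : ℕ → C(Set.Icc (0:ℝ) t₀, ℝ) →L[ℝ] ℝ) (n : ℕ) : ℝ :=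
  semS n (fun i => (1 - α i 1)⁻¹) * semS n (fun i => ‖α i‖) + 1


lemma semS_le {n : ℕ} (hn : 0 < n) {x : ℕ → ℝ} {c : ℝ} (h : ∀ i < n, |x i| ≤ c) :
    semS n x ≤ c := by
  haveI : Nonempty (Fin n) := ⟨⟨0, hn⟩⟩
  exact ciSup_le fun i => h i i.2

lemma le_semS {n : ℕ} (x : ℕ → ℝ) {i : ℕ} (h : i < n) : |x i| ≤ semS n x :=
  le_ciSup (f := fun i : Fin n => |x (i : ℕ)|) (Set.finite_range _).bddAbove ⟨i, h⟩

lemma semS_nonneg (n : ℕ) (x : ℕ → ℝ) : 0 ≤ semS n x :=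
  Real.iSup_nonneg fun _ => abs_nonneg _

lemma semS_le_sum {n : ℕ} (hn : 0 < n) (x : ℕ → ℝ) :
    semS n x ≤ ∑ i ∈ Finset.range n, |x i| :=
  semS_le hn fun i hi => Finset.single_le_sum (f := fun i => |x i|)
    (fun j _ => abs_nonneg _) (Finset.mem_range.2 hi)

lemma bdd_aux {X : Type*} [TopologicalSpace X] [CompactSpace X] {n : ℕ} (hn : 0 < n)
    (w : X → ℝ) (hw : Continuous w) (hw0 : ∀ t, 0 ≤ w t) (x : X → ℕ → ℝ) (hx : Continuous x) :
    BddAbove (Set.range fun t => w t * semS n (x t)) := by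
  have hc : Continuous fun t => w t * ∑ i ∈ Finset.range n, |x t i| := by
    refine hw.mul (continuous_finset_sum _ fun i _ => ?_)
    exact ((continuous_apply i).comp hx).abs
  obtain ⟨b, hb⟩ := (isCompact_range hc).bddAbove
  refine ⟨b, ?_⟩
  rintro _ ⟨t, rfl⟩
  exact (mul_le_mul_of_nonneg_left (semS_le_sum hn _) (hw0 t)).trans (hb ⟨t, rfl⟩)

lemma le_Psem {t₀ : ℝ} {n : ℕ} (hn : 0 < n) (x : C(Set.Ici (0:ℝ), ℕ → ℝ))
    (t : Set.Icc (0:ℝ) t₀) : semS n (x ⟨t.1, t.2.1⟩) ≤ Psem t₀ n x := by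
  have h := bdd_aux hn (fun _ : Set.Icc (0:ℝ) t₀ => (1:ℝ)) continuous_const
    (fun _ => zero_le_one) (fun t => x ⟨t.1, t.2.1⟩) (by fun_prop)
  simp only [one_mul] at h
  exact le_ciSup h t

lemma le_Qsem {t₀ tp θ : ℝ} (ht₀ : 0 ≤ t₀) {n : ℕ} (hn : 0 < n)
    (x : C(Set.Ici (0:ℝ), ℕ → ℝ)) (t : Set.Icc t₀ tp) :
    Real.exp (-θ * (t.1 - t₀)) * semS n (x ⟨t.1, le_trans ht₀ t.2.1⟩) ≤
      Qsem t₀ tp θ ht₀ n x := by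
  have h := bdd_aux hn (fun t : Set.Icc t₀ tp => Real.exp (-θ * (t.1 - t₀))) (by fun_prop)
    (fun _ => (Real.exp_pos _).le) (fun t => x ⟨t.1, le_trans ht₀ t.2.1⟩) (by fun_prop)
  exact le_ciSup h t

/-- Invariance of the set `Ω_p = {x : ℛ_p(x) ≤ ρ_p}` under `T`, where
`ℛ_p = max(𝒫_p, 𝒬_p)`, provided `M_p = G_p‖A_p‖_{L¹} + C_p/θ_p < 1` and
`ρ_p ≥ (1 − M_p)⁻¹ K_p` with `K_p = G_p t₀ B_p + C_p(t_p − t₀)`. -/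
theorem statement_10
    (t₀ : ℝ) (ht₀ : 0 < t₀)
    (f : ℕ → ℝ → (ℕ → ℝ) → ℝ)
    (hf : ∀ n, ContinuousOn (fun q : ℝ × (ℕ → ℝ) => f n q.1 q.2)
      (Set.Ici (0:ℝ) ×ˢ (Set.univ : Set (ℕ → ℝ))))
    (α : ℕ → C(Set.Icc (0:ℝ) t₀, ℝ) →L[ℝ] ℝ)
    (hα : ∀ n, α n 1 ≠ 1)
    (T : C(Set.Ici (0:ℝ), ℕ → ℝ) → C(Set.Ici (0:ℝ), ℕ → ℝ))
    (hT : IsT t₀ f α T)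
    (np : ℕ → ℕ) (hnp : StrictMono np) (hnp0 : ∀ q, 0 < np q)
    (p : ℕ)
    (tp : ℝ) (htp : t₀ < tp) (θ : ℝ) (hθ : 0 < θ)
    (A : ℝ → ℝ) (B C : ℝ)
    (hA_nonneg : ∀ t ∈ Set.Icc (0:ℝ) t₀, 0 ≤ A t)
    (hA_int : IntervalIntegrable A MeasureTheory.volume 0 t₀)
    (hB : 0 ≤ B) (hC : 0 ≤ C)
    (hgrowth1 : ∀ t ∈ Set.Icc (0:ℝ) t₀, ∀ x : ℕ → ℝ,
      semS (np p) (fun i => f i t x) ≤ A t * semS (np p) x + B)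
    (hgrowth2 : ∀ t ∈ Set.Icc t₀ tp, ∀ x : ℕ → ℝ,
      semS (np p) (fun i => f i t x) ≤ C * (semS (np p) x + 1))
    (hM : Gconst t₀ α (np p) * (∫ t in (0:ℝ)..t₀, A t) + C / θ < 1)
    (ρ : ℝ)
    (hρ : (1 - (Gconst t₀ α (np p) * (∫ t in (0:ℝ)..t₀, A t) + C / θ))⁻¹ *
        (Gconst t₀ α (np p) * t₀ * B + C * (tp - t₀)) ≤ ρ) :
    Set.MapsTo T
      {x | max (Psem t₀ (np p) x) (Qsem t₀ tp θ ht₀.le (np p) x) ≤ ρ}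
      {x | max (Psem t₀ (np p) x) (Qsem t₀ tp θ ht₀.le (np p) x) ≤ ρ} := by
  intro v hv
  have hN := hnp0 p
  generalize hNN : np p = N at *
  simp only [Set.mem_setOf_eq, max_le_iff] at hv ⊢
  obtain ⟨hP, hQ⟩ := hv
  have hpj : ∀ s (hs : 0 ≤ s), pj s = ⟨s, hs⟩ := fun s hs => Subtype.ext (max_eq_right hs)
  have hv1 : ∀ s ∈ Set.Icc (0:ℝ) t₀, semS N (v (pj s)) ≤ ρ := fun s hs => by
    rw [hpj s hs.1]; exact (le_Psem hN v ⟨s, hs⟩).trans hP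
  have hv2 : ∀ s ∈ Set.Icc t₀ tp, semS N (v (pj s)) ≤ Real.exp (θ * (s - t₀)) * ρ :=
    fun s hs => by
    rw [hpj s (ht₀.le.trans hs.1)]
    have h := (le_Qsem (θ := θ) ht₀.le hN v ⟨s, hs⟩).trans hQ
    have h2 := mul_le_mul_of_nonneg_left h (Real.exp_pos (θ * (s - t₀))).le
    rw [← mul_assoc, ← Real.exp_add] at h2
    simpa using h2
  have hρ0 : 0 ≤ ρ := (semS_nonneg _ _).trans (hv1 0 ⟨le_rfl, ht₀.le⟩)
  set a := ∫ t in (0:ℝ)..t₀, A t with ha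
  set G := Gconst t₀ α N with hG
  have ha0 : 0 ≤ a := intervalIntegral.integral_nonneg ht₀.le hA_nonneg
  have hcont : ∀ i, ContinuousOn (fun s => f i s (v (pj s))) (Set.Ici 0) := fun i => by
    have hp : Continuous pj := by unfold pj; fun_prop
    have : Continuous fun s => (s, v (pj s)) := by fun_prop
    exact (hf i).comp this.continuousOn (fun s hs => ⟨hs, trivial⟩)
  have hint : ∀ i, ∀ x y : ℝ, 0 ≤ x → x ≤ y →
      IntervalIntegrable (fun s => f i s (v (pj s))) volume x y := fun i x y hx hxy => by
    apply ContinuousOn.intervalIntegrable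
    refine (hcont i).mono ?_
    rw [Set.uIcc_of_le hxy]
    exact fun s hs => hx.trans hs.1
  have hD : ∀ i < N, ∀ t ∈ Set.Icc (0:ℝ) t₀,
      |∫ s in (0:ℝ)..t, f i s (v (pj s))| ≤ a * ρ + t₀ * B := fun i hi t ht => by
    have hg : IntervalIntegrable (fun s => A s * ρ + B) volume 0 t₀ :=
      (hA_int.mul_const ρ).add intervalIntegrable_const
    have hpt : ∀ s ∈ Set.Icc (0:ℝ) t₀, |f i s (v (pj s))| ≤ A s * ρ + B := fun s hs => by
      have h1 : |f i s (v (pj s))| ≤ semS N (fun i => f i s (v (pj s))) :=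
        le_semS (fun i => f i s (v (pj s))) hi
      have h2 := hgrowth1 s hs (v (pj s))
      have h3 := mul_le_mul_of_nonneg_left (hv1 s hs) (hA_nonneg s hs)

      linarith
    calc |∫ s in (0:ℝ)..t, f i s (v (pj s))|
        ≤ ∫ s in (0:ℝ)..t, |f i s (v (pj s))| :=
          intervalIntegral.abs_integral_le_integral_abs ht.1
      _ ≤ ∫ s in (0:ℝ)..t₀, |f i s (v (pj s))| := by
          rw [← intervalIntegral.integral_add_adjacent_intervals
            (hint i 0 t le_rfl ht.1).abs (hint i t t₀ ht.1 ht.2).abs]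
          have := intervalIntegral.integral_nonneg (μ := volume) ht.2
            (fun s _ => abs_nonneg (f i s (v (pj s))))
          linarith
      _ ≤ ∫ s in (0:ℝ)..t₀, (A s * ρ + B) :=
          intervalIntegral.integral_mono_on ht₀.le (hint i 0 t₀ le_rfl ht₀.le).abs hg hpt
      _ = a * ρ + t₀ * B := by
          rw [intervalIntegral.integral_add (hA_int.mul_const ρ) intervalIntegrable_const,
            intervalIntegral.integral_mul_const, intervalIntegral.integral_const]
          simp [ha]
  have hD0 : 0 ≤ a * ρ + t₀ * B := by positivity
  have hbase : ∀ i < N, ∀ P : C(Set.Icc (0:ℝ) t₀, ℝ),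
      (∀ s : Set.Icc (0:ℝ) t₀, P s = ∫ u in (0:ℝ)..(s : ℝ), f i u (v (pj u))) →
      |(1 - α i 1)⁻¹ * α i P| ≤ (G - 1) * (a * ρ + t₀ * B) := fun i hi P hPs => by
    have hPn : ‖P‖ ≤ a * ρ + t₀ * B := by
      rw [ContinuousMap.norm_le _ hD0]
      intro s
      rw [hPs s]
      exact hD i hi s s.2
    have h1 := le_semS (fun i => (1 - α i 1)⁻¹) hi
    have h2 : ‖α i‖ ≤ semS N (fun i => ‖α i‖) :=
      (le_abs_self _).trans (le_semS (fun i => ‖α i‖) hi)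
    have h3 : |α i P| ≤ semS N (fun i => ‖α i‖) * (a * ρ + t₀ * B) :=
      ((α i).le_opNorm P).trans (mul_le_mul h2 hPn (norm_nonneg _) (semS_nonneg _ _))
    rw [abs_mul, hG, Gconst, add_sub_cancel_right, mul_assoc]
    exact mul_le_mul h1 h3 (abs_nonneg _) (semS_nonneg _ _)
  have hM0 : 0 < 1 - (G * a + C / θ) := by linarith
  rw [inv_mul_le_iff₀ hM0] at hρ
  have hCθ : 0 ≤ C / θ * ρ := by positivity
  have hCt : 0 ≤ C * (tp - t₀) := mul_nonneg hC (by linarith)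
  have hG0 : 0 ≤ G * (a * ρ + t₀ * B) := by
    refine mul_nonneg ?_ hD0
    have := mul_nonneg (semS_nonneg N (fun i => (1 - α i 1)⁻¹)) (semS_nonneg N (fun i => ‖α i‖))
    rw [hG, Gconst]; linarith
  constructor
  · haveI : Nonempty (Set.Icc (0:ℝ) t₀) := ⟨⟨0, le_rfl, ht₀.le⟩⟩
    refine ciSup_le fun t => semS_le hN fun i hi => ?_
    obtain ⟨P, hPs, hTv⟩ := hT v i
    rw [hTv]
    have h1 := abs_add_le ((1 - α i 1)⁻¹ * α i P) (∫ s in (0:ℝ)..t.1, f i s (v (pj s)))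
    have h2 := hbase i hi P hPs
    have h3 := hD i hi t.1 t.2
    simp only
    nlinarith
  · haveI : Nonempty (Set.Icc t₀ tp) := ⟨⟨t₀, le_rfl, htp.le⟩⟩
    refine ciSup_le fun t => ?_
    obtain ⟨t, ht1, ht2⟩ := t
    simp only
    set E := Real.exp (θ * (t - t₀)) with hE
    have hE1 : 1 ≤ E := Real.one_le_exp (mul_nonneg hθ.le (by linarith))
    suffices h : semS N (T v ⟨t, le_trans ht₀.le ht1⟩) ≤ E * ρ by
      rw [neg_mul, Real.exp_neg, inv_mul_le_iff₀ (Real.exp_pos _)]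
      exact h
    refine semS_le hN fun i hi => ?_
    obtain ⟨P, hPs, hTv⟩ := hT v i
    rw [hTv]
    simp only
    have hpt : ∀ s ∈ Set.Icc t₀ t,
        |f i s (v (pj s))| ≤ C * (Real.exp (θ * (s - t₀)) * ρ + 1) := fun s hs => by
      have hs' : s ∈ Set.Icc t₀ tp := ⟨hs.1, hs.2.trans ht2⟩
      have h1 : |f i s (v (pj s))| ≤ semS N (fun i => f i s (v (pj s))) :=
        le_semS (fun i => f i s (v (pj s))) hi
      have h2 := hgrowth2 s hs' (v (pj s))
      have h3 := mul_le_mul_of_nonneg_left (hv2 s hs') hC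

      linarith
    have hgc : Continuous fun s => C * (Real.exp (θ * (s - t₀)) * ρ + 1) := by fun_prop
    have hI : |∫ s in t₀..t, f i s (v (pj s))| ≤ C / θ * ρ * (E - 1) + C * (t - t₀) := by
      calc |∫ s in t₀..t, f i s (v (pj s))|
          ≤ ∫ s in t₀..t, |f i s (v (pj s))| :=
            intervalIntegral.abs_integral_le_integral_abs ht1
        _ ≤ ∫ s in t₀..t, C * (Real.exp (θ * (s - t₀)) * ρ + 1) :=
            intervalIntegral.integral_mono_on ht1 (hint i t₀ t ht₀.le ht1).abs
              (hgc.intervalIntegrable _ _) hpt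
        _ = _ := by
            rw [intervalIntegral.integral_eq_sub_of_hasDerivAt
              (f := fun s => C * (Real.exp (θ * (s - t₀)) * ρ / θ + s)) _
              (hgc.intervalIntegrable _ _)]
            · simp only [sub_self, mul_zero, Real.exp_zero]
              field_simp
              ring
            · intro s _
              have h1 : HasDerivAt (fun s => θ * (s - t₀)) θ s := by
                simpa using ((hasDerivAt_id s).sub_const t₀).const_mul θ
              have h2 := (((h1.exp.mul_const ρ).div_const θ).add (hasDerivAt_id s)).const_mul C
              rw [mul_right_comm, mul_div_assoc, div_self hθ.ne', mul_one] at h2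
              exact h2
    have hsplit := intervalIntegral.integral_add_adjacent_intervals
      (hint i 0 t₀ le_rfl ht₀.le) (hint i t₀ t ht₀.le ht1)
    rw [← hsplit]
    have h1 := abs_add_le ((1 - α i 1)⁻¹ * α i P)
      ((∫ s in (0:ℝ)..t₀, f i s (v (pj s))) + ∫ s in t₀..t, f i s (v (pj s)))
    have h1' := abs_add_le (∫ s in (0:ℝ)..t₀, f i s (v (pj s))) (∫ s in t₀..t, f i s (v (pj s)))
    have h2 := hbase i hi P hPs
    have h3 := hD i hi t₀ ⟨ht₀.le, le_rfl⟩
    have h4 : C * (t - t₀) ≤ C * (tp - t₀) := mul_le_mul_of_nonneg_left (by linarith) hC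
    have h5 : G * (a * ρ + t₀ * B) + C / θ * ρ + C * (tp - t₀) ≤ ρ := by linarith
    have h6 := mul_le_mul_of_nonneg_left h5 (zero_le_one.trans hE1)
    have h7 : 0 ≤ (E - 1) * (G * (a * ρ + t₀ * B) + C * (tp - t₀)) :=
      mul_nonneg (by linarith) (by linarith)
    have h8 : (G - 1) * (a * ρ + t₀ * B) = G * (a * ρ + t₀ * B) - (a * ρ + t₀ * B) := by ring
    have h9 : C / θ * ρ * (E - 1) = E * (C / θ * ρ) - C / θ * ρ := by ring
    have h10 : E * (G * (a * ρ + t₀ * B) + C / θ * ρ + C * (tp - t₀)) =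
      (E - 1) * (G * (a * ρ + t₀ * B) + C * (tp - t₀)) + (G * (a * ρ + t₀ * B) + C * (tp - t₀))
        + E * (C / θ * ρ) := by ring
    linarith
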